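/- For every integer n ≥ 2, let B be the set of permutations w of {1,...,n} with w(1) ∉ {1,2} (i.e., w(1) ≥ 3). Then there exists a bijection Φ̃ from B to B such that for every w ∈ B, sign(Φ̃(w)) = sign(w) and depth(w) = drp(Φ̃(w)). -/

import Mathlib

open Finset

/-- The one-line notation value of `π` at position `k ∈ {1,…,n}`:
`oneLine π k = π(k)` with `1`-indexed positions and values. -/
def oneLine {n : ℕ} (π : Equiv.Perm (Fin n)) (k : ℕ) : ℕ :=
  if h : k - 1 < n then ((π ⟨k - 1, h⟩ : Fin n) : ℕ) + 1 else k

/-- `SUC(π) = {i ∈ {1,…,n-1} : π(i+1) = π(i)+1}` (position set). -/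
def SUC {n : ℕ} (π : Equiv.Perm (Fin n)) : Finset ℕ :=
  (Finset.Icc 1 (n - 1)).filter (fun i => oneLine π (i + 1) = oneLine π i + 1)

/-- `FIX(π) = {i ∈ {1,…,n-1} : π(i) = i}` (position set). -/
def FIX {n : ℕ} (π : Equiv.Perm (Fin n)) : Finset ℕ :=
  (Finset.Icc 1 (n - 1)).filter (fun i => oneLine π i = i)

/-- `Asc₂(π) = {π(i+1) : i ∈ {1,…,n-1}, π(i+1) ≥ π(i)+2}` (value set). -/
def Asc2 {n : ℕ} (π : Equiv.Perm (Fin n)) : Finset ℕ :=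
  ((Finset.Icc 1 (n - 1)).filter (fun i => oneLine π i + 2 ≤ oneLine π (i + 1))).image
    (fun i => oneLine π (i + 1))

/-- `Des(π) = {π(i+1) : i ∈ {1,…,n-1}, π(i) > π(i+1)}` (value set). -/
def DesSet {n : ℕ} (π : Equiv.Perm (Fin n)) : Finset ℕ :=
  ((Finset.Icc 1 (n - 1)).filter (fun i => oneLine π (i + 1) < oneLine π i)).image
    (fun i => oneLine π (i + 1))

/-- `Suc(π) = {π(i+1) : i ∈ {1,…,n-1}, π(i+1) = π(i)+1}` (value set). -/
def SucSet {n : ℕ} (π : Equiv.Perm (Fin n)) : Finset ℕ :=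
  ((Finset.Icc 1 (n - 1)).filter (fun i => oneLine π (i + 1) = oneLine π i + 1)).image
    (fun i => oneLine π (i + 1))

/-- `Aexc(π) = {π(i) : i ∈ {2,…,n}, π(i) < i}` (value set). -/
def Aexc {n : ℕ} (π : Equiv.Perm (Fin n)) : Finset ℕ :=
  ((Finset.Icc 2 n).filter (fun i => oneLine π i < i)).image (fun i => oneLine π i)

/-- `Êxc(π) = {π(i) : i ∈ {2,…,n}, π(i) > i}` (value set). -/
def ExcHat {n : ℕ} (π : Equiv.Perm (Fin n)) : Finset ℕ :=
  ((Finset.Icc 2 n).filter (fun i => i < oneLine π i)).image (fun i => oneLine π i)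

/-- `F̂ix(π) = {π(i) : i ∈ {2,…,n}, π(i) = i}` (value set). -/
def FixHat {n : ℕ} (π : Equiv.Perm (Fin n)) : Finset ℕ :=
  ((Finset.Icc 2 n).filter (fun i => oneLine π i = i)).image (fun i => oneLine π i)

/-- `depth(π) = ∑_{i : π(i) > i} (π(i) − i)`. -/
def depthStat {n : ℕ} (π : Equiv.Perm (Fin n)) : ℕ :=
  ∑ i ∈ (Finset.Icc 1 n).filter (fun i => i < oneLine π i), (oneLine π i - i)

/-- `drp(π) = ∑_{i ∈ {1,…,n-1} : π(i) > π(i+1)} (π(i) − π(i+1))`. -/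
def drpStat {n : ℕ} (π : Equiv.Perm (Fin n)) : ℕ :=
  ∑ i ∈ (Finset.Icc 1 (n - 1)).filter (fun i => oneLine π (i + 1) < oneLine π i),
    (oneLine π i - oneLine π (i + 1))

/-- `exc(π) = |{i ∈ {1,…,n} : π(i) > i}|`. -/
def excNum {n : ℕ} (π : Equiv.Perm (Fin n)) : ℕ :=
  ((Finset.Icc 1 n).filter (fun i => i < oneLine π i)).card

/-- `nexc(π) = |{i ∈ {1,…,n} : π(i) < i}|`. -/
def nexcNum {n : ℕ} (π : Equiv.Perm (Fin n)) : ℕ :=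
  ((Finset.Icc 1 n).filter (fun i => oneLine π i < i)).card

/-- `des(π) = |{i ∈ {1,…,n-1} : π(i) > π(i+1)}|`. -/
def desNum {n : ℕ} (π : Equiv.Perm (Fin n)) : ℕ :=
  ((Finset.Icc 1 (n - 1)).filter (fun i => oneLine π (i + 1) < oneLine π i)).card

/-- `asc(π) = |{i ∈ {1,…,n-1} : π(i) < π(i+1)}|`. -/
def ascNum {n : ℕ} (π : Equiv.Perm (Fin n)) : ℕ :=
  ((Finset.Icc 1 (n - 1)).filter (fun i => oneLine π i < oneLine π (i + 1))).card

/-- `inv(π) = |{(i,j) : 1 ≤ i < j ≤ n, π(i) > π(j)}|`. -/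
def invNum {n : ℕ} (π : Equiv.Perm (Fin n)) : ℕ :=
  (((Finset.Icc 1 n) ×ˢ (Finset.Icc 1 n)).filter
    (fun p : ℕ × ℕ => p.1 < p.2 ∧ oneLine π p.2 < oneLine π p.1)).card

/-!
Cutting the one-line word of `w` after each right-to-left minimum and reading the blocks as cycles
gives Foata's transform `foata w`, whose depth is the drop of `w` and whose first letter is that
of `w`. Its sign may differ from that of `w`, but it commutes with the exchange `τ` of the two
smallest letters, because the preimage `link w i` of `w i` under `foata w` does not change when
those two letters are exchanged in `w`. Since `τ` reverses the sign, correcting `foata w` by `τ`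
exactly when its sign is wrong is still a bijection. As long as the first letter is at least `3`,
`τ` does not change the depth, so the inverse of the corrected transform is the required map.
-/

section SignCorrection

theorem exists_perm_preserving_sign {β : Type*} (F T : Equiv.Perm β) (s : β → ℤˣ)
    (hFT : ∀ b, F (T b) = T (F b)) (hs : ∀ b, s (T b) = -s b) :
    ∃ Ψ : Equiv.Perm β, ∀ b, s (Ψ b) = s b ∧ (Ψ b = F b ∨ Ψ b = T (F b)) := by
  let Ψ (b : β) : β := if s (F b) = s b then F b else T (F b)
  have hsΨ (b : β) : s (Ψ b) = s b := by
    by_cases h : s (F b) = s b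
    · simp only [Ψ, if_pos h, h]
    · simp only [Ψ, if_neg h, hs, Int.units_ne_iff_eq_neg.mp h, neg_neg]
  have hΨ (b : β) : Ψ b = F b ∨ Ψ b = T (F b) := ite_eq_or_eq _ _ _
  have hne {b c : β} (hbc : Ψ b = Ψ c) : b ≠ T c := fun h => by
    have hsbc : s b = s c := by rw [← hsΨ b, hbc, hsΨ]
    rw [h, hs] at hsbc
    exact units_ne_neg_self _ hsbc.symm
  have hinj : Function.Injective Ψ := fun b c hbc => by
    rcases hΨ b with hb | hb <;> rcases hΨ c with hc | hc
    · exact F.injective (by rw [← hb, hbc, hc])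
    · exact absurd (F.injective (by rw [← hb, hbc, hc, hFT])) (hne hbc)
    · exact absurd (F.injective (by rw [← hc, ← hbc, hb, hFT])) (hne hbc.symm)
    · exact F.injective (T.injective (by rw [← hb, hbc, hc]))
  have hsurj : Function.Surjective Ψ := fun c => by
    obtain ⟨b, rfl⟩ := (F.surjective.comp T.surjective) c
    by_cases h : s (F b) = s b
    · exact ⟨T b, if_pos (by rw [hFT, hs, hs, h])⟩
    · exact ⟨b, (if_neg h).trans (hFT b).symm⟩
  exact ⟨Equiv.ofBijective Ψ ⟨hinj, hsurj⟩, fun b => ⟨hsΨ b, hΨ b⟩⟩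

end SignCorrection

section OneLine

variable {n : ℕ}

theorem oneLine_val_add_one (w : Equiv.Perm (Fin n)) (i : Fin n) :
    oneLine w (i + 1) = w i + 1 := by
  simp [oneLine]

theorem three_le_oneLine_one_iff (w : Equiv.Perm (Fin (n + 1))) :
    3 ≤ oneLine w 1 ↔ 2 ≤ (w 0 : ℕ) := by
  have h := oneLine_val_add_one w 0
  rw [Fin.val_zero, zero_add] at h
  omega

theorem sum_Icc_one_eq_sum_fin {M : Type*} [AddCommMonoid M] (f : ℕ → M) (n : ℕ) :
    ∑ k ∈ Icc 1 n, f k = ∑ i : Fin n, f (i + 1) := by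
  rw [Fin.sum_univ_eq_sum_range (fun k => f (k + 1)), range_eq_Ico, sum_Ico_add', zero_add,
    Ico_add_one_right_eq_Icc]

theorem sum_Icc_one_filter_lt_tsub (a b : ℕ → ℕ) (n : ℕ) :
    ∑ k ∈ Icc 1 n with a k < b k, (b k - a k) = ∑ i : Fin n, (b (i + 1) - a (i + 1)) := by
  rw [sum_filter_of_ne fun k _ hk => by omega, sum_Icc_one_eq_sum_fin]

theorem invNum_eq_sum_card (w : Equiv.Perm (Fin n)) :
    invNum w = ∑ i, #{j ∈ Ioi i | w j < w i} := by
  simp only [invNum, card_filter, sum_product, sum_Icc_one_eq_sum_fin, oneLine_val_add_one,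
    add_lt_add_iff_right, Fin.val_fin_lt, ite_and, ← filter_lt_eq_Ioi, sum_filter]

theorem neg_one_pow_invNum (w : Equiv.Perm (Fin n)) :
    (-1 : ℤ) ^ invNum w = Equiv.Perm.sign w := by
  rw [invNum_eq_sum_card, ← prod_pow_eq_pow_sum, Equiv.Perm.sign_eq_prod_prod_Ioi, Units.coe_prod]
  refine prod_congr rfl fun i _ => ?_
  have hle (j : Fin n) (hj : j ∈ Ioi i) : ¬ w i < w j ↔ w j < w i :=
    not_lt.trans (w.injective.ne (mem_Ioi.mp hj).ne').le_iff_lt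
  rw [prod_ite, prod_const_one, one_mul, prod_const, filter_congr hle]
  simp

theorem depthStat_eq_sum (w : Equiv.Perm (Fin n)) :
    depthStat w = ∑ i, ((w i : ℕ) - i) := by
  rw [depthStat, sum_Icc_one_filter_lt_tsub (fun k => k)]
  simp only [oneLine_val_add_one, Nat.add_sub_add_right]

theorem depthStat_eq_sum_sub_apply (w : Equiv.Perm (Fin n)) :
    depthStat w = ∑ i : Fin n, ((i : ℕ) - w i) := by
  have hsum : ∑ i, ((w i : ℕ) - i + i) = ∑ i : Fin n, ((i : ℕ) - w i + w i) :=
    sum_congr rfl fun i _ => by omega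
  rw [sum_add_distrib, sum_add_distrib, Equiv.sum_comp w fun i => (i : ℕ)] at hsum
  rw [depthStat_eq_sum]
  exact Nat.add_right_cancel hsum

theorem drpStat_eq_sum (w : Equiv.Perm (Fin (n + 1))) :
    drpStat w = ∑ k : Fin n, ((w k.castSucc : ℕ) - w k.succ) := by
  rw [drpStat, sum_Icc_one_filter_lt_tsub (fun k => oneLine w (k + 1))]
  refine sum_congr rfl fun k _ => ?_
  have h := oneLine_val_add_one w k.castSucc
  have h' := oneLine_val_add_one w k.succ
  simp only [Fin.val_castSucc, Fin.val_succ] at h h'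
  rw [h, h', Nat.add_sub_add_right]

end OneLine

section TailMin

variable {ι α : Type*} [Preorder ι] [LocallyFiniteOrderTop ι]

/-- The minimum of the letters of the word `w` at positions `≥ i`. The right-to-left minima of `w`
are its values. -/
def tailMin [SemilatticeInf α] (w : ι → α) (i : ι) : α :=
  (Ici i).inf' nonempty_Ici w

theorem tailMin_le [SemilatticeInf α] (w : ι → α) {i j : ι} (h : i ≤ j) : tailMin w i ≤ w j :=
  inf'_le _ (mem_Ici.mpr h)

theorem tailMin_mono [SemilatticeInf α] (w : ι → α) : Monotone (tailMin w) := fun _ _ h =>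
  inf'_mono _ (Ici_subset_Ici.mpr h) _

variable [LinearOrder α]

theorem exists_tailMin_eq (w : ι → α) (i : ι) : ∃ j, i ≤ j ∧ tailMin w i = w j := by
  obtain ⟨j, hj, h⟩ := exists_mem_eq_inf' nonempty_Ici w
  exact ⟨j, mem_Ici.mp hj, h⟩

theorem tailMin_sup_const (w : ι → α) (a : α) (i : ι) :
    tailMin (fun j => w j ⊔ a) i = tailMin w i ⊔ a :=
  (map_finset_inf' (OrderHom.mk (· ⊔ a) fun _ _ h => sup_le_sup_right h a) nonempty_Ici w).symm

end TailMin

theorem tailMin_le_tailMin_of_eqOn {ι α : Type*} [LinearOrder ι] [LocallyFiniteOrderTop ι]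
    [LinearOrder α] {v w : ι → α} {i : ι} (hv : Function.Surjective v) (hw : Function.Injective w)
    (h : Set.EqOn v w (Set.Iio i)) : tailMin v i ≤ tailMin w i := by
  obtain ⟨j, hij, hj⟩ := exists_tailMin_eq w i
  obtain ⟨l, hl⟩ := hv (w j)
  rw [hj, ← hl]
  refine tailMin_le v (not_lt.mp fun hli => ?_)
  rw [h hli] at hl
  exact (hli.trans_le hij).ne (hw hl)

section Link

variable {m : ℕ} {α : Type*} [LinearOrder α] (w : Fin (m + 1) → α)

/-- The letter preceding `w i` on its cycle, when the word `w` is cut after each right-to-left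
minimum and the blocks are read as cycles. At position `k + 1` there are two cases. If `w k` does
not end its block, it is the preceding letter and exceeds `tailMin w (k + 1)`. If it does, a new
block starts, whose last letter `tailMin w (k + 1)` is the preceding one and exceeds `w k`. -/
def link : Fin (m + 1) → α :=
  Fin.cases (tailMin w 0) fun k => w k.castSucc ⊔ tailMin w k.succ

@[simp]
theorem link_zero : link w 0 = tailMin w 0 := rfl

@[simp]
theorem link_succ (k : Fin m) : link w k.succ = w k.castSucc ⊔ tailMin w k.succ := rfl

theorem link_sup_const (a : α) (i : Fin (m + 1)) : link (fun j => w j ⊔ a) i = link w i ⊔ a := by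
  cases i using Fin.cases with
  | zero => exact tailMin_sup_const w a 0
  | succ k => rw [link_succ, link_succ, tailMin_sup_const, ← sup_sup_distrib_right]

variable {w}

theorem tailMin_lt_link_succ (hw : Function.Injective w) {i : Fin (m + 1)} {k : Fin m}
    (hik : i ≤ k.castSucc) : tailMin w i < link w k.succ := by
  obtain ⟨l, hkl, hl⟩ := exists_tailMin_eq w k.succ
  have hne : w k.castSucc ≠ tailMin w k.succ := fun h =>
    (Fin.castSucc_lt_succ.trans_le hkl).ne (hw (h.trans hl))
  exact (le_inf (tailMin_le w hik)
    (tailMin_mono w (hik.trans Fin.castSucc_lt_succ.le))).trans_lt (inf_lt_sup.mpr hne)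

theorem link_injective (hw : Function.Injective w) : Function.Injective (link w) := by
  refine Function.Injective.of_lt_imp_ne fun i j hij => ?_
  obtain ⟨k, rfl⟩ := Fin.exists_succ_eq_of_ne_zero (Fin.ne_zero_of_lt hij)
  have hik : i ≤ k.castSucc := Fin.le_castSucc_iff.mpr hij
  have hlt := tailMin_lt_link_succ hw hik
  obtain ⟨l, hkl, hl⟩ : ∃ l, k.castSucc ≤ l ∧ link w k.succ = w l := by
    obtain ⟨l, hkl, hl⟩ := exists_tailMin_eq w k.succ
    rw [link_succ, hl]
    rcases max_choice (w k.castSucc) (w l) with h | h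
    · exact ⟨_, le_rfl, h⟩
    · exact ⟨l, Fin.castSucc_lt_succ.le.trans hkl, h⟩
  cases i using Fin.cases with
  | zero => exact hlt.ne
  | succ p =>
    have hp : w p.castSucc ≠ w l := fun h =>
      (Fin.castSucc_lt_succ.trans_le (hik.trans hkl)).ne (hw h)
    rcases max_choice (w p.castSucc) (tailMin w p.succ) with h | h
    · rwa [link_succ w p, h, hl]
    · rw [link_succ w p, h]
      exact hlt.ne

end Link

section Foata

variable {m : ℕ} (w : Equiv.Perm (Fin (m + 1)))

theorem tailMin_coe_perm_zero : tailMin w 0 = 0 :=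
  Fin.le_zero_iff.mp ((tailMin_le w (Fin.zero_le (w.symm 0))).trans_eq (w.apply_symm_apply 0))

/-- The permutation of the letters with one-line word `link w`. -/
noncomputable def linkPerm : Equiv.Perm (Fin (m + 1)) :=
  Equiv.ofBijective (link w) (link_injective w.injective).bijective_of_finite

@[simp]
theorem linkPerm_apply (i : Fin (m + 1)) : linkPerm w i = link w i := rfl

/-- Foata's fundamental transform: the permutation whose cycles are the blocks of the word `w` cut
after each right-to-left minimum. -/
noncomputable def foata : Equiv.Perm (Fin (m + 1)) :=
  w * (linkPerm w)⁻¹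

theorem foata_link (i : Fin (m + 1)) : foata w (link w i) = w i := by
  simp only [foata, ← linkPerm_apply, Equiv.Perm.mul_apply, Equiv.Perm.inv_def,
    Equiv.symm_apply_apply]

theorem foata_zero : foata w 0 = w 0 := by
  simpa only [link_zero, tailMin_coe_perm_zero] using foata_link w 0

theorem foata_injective :
    Function.Injective (foata : Equiv.Perm (Fin (m + 1)) → Equiv.Perm (Fin (m + 1))) := by
  intro v w hvw
  ext1 i
  induction i using WellFoundedLT.induction with
  | ind i ih =>
    have heqOn : Set.EqOn v w (Set.Iio i) := ih
    have htail : tailMin v i = tailMin w i :=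
      (tailMin_le_tailMin_of_eqOn v.surjective w.injective heqOn).antisymm
        (tailMin_le_tailMin_of_eqOn w.surjective v.injective heqOn.symm)
    have hlink : link v i = link w i := by
      cases i using Fin.cases with
      | zero => exact htail
      | succ k => rw [link_succ, link_succ, ih _ Fin.castSucc_lt_succ, htail]
    rw [← foata_link v, ← foata_link w, hvw, hlink]

theorem depthStat_foata : depthStat (foata w) = drpStat w := by
  have htail (i : Fin (m + 1)) : (tailMin w i).val ≤ (w i).val := tailMin_le w le_rfl
  have hzero : (link w 0).val - (w 0).val = 0 := Nat.sub_eq_zero_of_le (htail 0)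
  have hsucc (k : Fin m) :
      (link w k.succ).val - (w k.succ).val = (w k.castSucc).val - (w k.succ).val := by
    have := htail k.succ
    rw [link_succ, Fin.coe_max]
    omega
  rw [depthStat_eq_sum_sub_apply, drpStat_eq_sum, ← Equiv.sum_comp (linkPerm w)]
  simp only [linkPerm_apply, foata_link, Fin.sum_univ_succ, hzero, hsucc, zero_add]

end Foata

section SwapZeroOne

variable {m : ℕ}

theorem swap_zero_one_sup_one (x : Fin (m + 2)) : Equiv.swap 0 1 x ⊔ 1 = x ⊔ 1 := by
  rw [Equiv.swap_apply_def]
  split_ifs with h₀ h₁ <;> simp [*]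

theorem link_swap_zero_one_mul (w : Equiv.Perm (Fin (m + 2))) :
    link (Equiv.swap 0 1 * w : Equiv.Perm (Fin (m + 2))) = link w := by
  -- Past position `0` the value of `link` is never `0`, so it only sees letters cut off at `1`.
  have sup_one (v : Equiv.Perm (Fin (m + 2))) (k : Fin (m + 1)) :
      link v k.succ = link (fun j => v j ⊔ 1) k.succ := by
    rw [link_sup_const, left_eq_sup]
    have hlt : tailMin v 0 < link v k.succ :=
      tailMin_lt_link_succ v.injective k.castSucc.zero_le
    exact Fin.one_le_of_ne_zero (Fin.ne_zero_of_lt hlt)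
  ext1 i
  cases i using Fin.cases with
  | zero => rw [link_zero, link_zero, tailMin_coe_perm_zero, tailMin_coe_perm_zero]
  | succ k => simp only [sup_one, Equiv.Perm.mul_apply, swap_zero_one_sup_one]

theorem foata_swap_zero_one_mul (w : Equiv.Perm (Fin (m + 2))) :
    foata (Equiv.swap 0 1 * w) = Equiv.swap 0 1 * foata w := by
  have h : linkPerm (Equiv.swap 0 1 * w) = linkPerm w :=
    Equiv.coe_fn_injective (link_swap_zero_one_mul w)
  rw [foata, foata, h, mul_assoc]

theorem swap_zero_one_apply_of_two_le {x : Fin (m + 2)} (hx : 2 ≤ (x : ℕ)) :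
    Equiv.swap 0 1 x = x :=
  Equiv.swap_apply_of_ne_of_ne (by rintro rfl; simp at hx) (by rintro rfl; simp at hx)

theorem val_swap_zero_one_sub_one (x : Fin (m + 2)) :
    (Equiv.swap 0 1 x).val - 1 = x.val - 1 := by
  rw [Equiv.swap_apply_def]
  split_ifs with h₀ h₁ <;> simp [*]

theorem two_le_swap_zero_one_iff (x : Fin (m + 2)) :
    2 ≤ (Equiv.swap 0 1 x).val ↔ 2 ≤ x.val := by
  have := val_swap_zero_one_sub_one x
  omega

theorem depthStat_swap_zero_one_mul {w : Equiv.Perm (Fin (m + 2))} (hw : 2 ≤ (w 0 : ℕ)) :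
    depthStat (Equiv.swap 0 1 * w) = depthStat w := by
  rw [depthStat_eq_sum, depthStat_eq_sum]
  refine sum_congr rfl fun i _ => ?_
  cases i using Fin.cases with
  | zero => rw [Equiv.Perm.mul_apply, swap_zero_one_apply_of_two_le hw]
  | succ k =>
    rw [Equiv.Perm.mul_apply, Fin.val_succ, tsub_add_eq_tsub_tsub_swap, tsub_add_eq_tsub_tsub_swap,
      val_swap_zero_one_sub_one]

end SwapZeroOne

theorem exists_perm_sign_eq_and_depthStat_eq_drpStat (m : ℕ) :
    ∃ Ψ : Equiv.Perm (Equiv.Perm (Fin (m + 2))), ∀ w,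
      Equiv.Perm.sign (Ψ w) = Equiv.Perm.sign w ∧ (2 ≤ (Ψ w 0 : ℕ) ↔ 2 ≤ (w 0 : ℕ)) ∧
        (2 ≤ (w 0 : ℕ) → depthStat (Ψ w) = drpStat w) := by
  obtain ⟨Ψ, hΨ⟩ := exists_perm_preserving_sign
    (Equiv.ofBijective foata foata_injective.bijective_of_finite)
    (Equiv.mulLeft (Equiv.swap (0 : Fin (m + 2)) 1)) Equiv.Perm.sign foata_swap_zero_one_mul
    (fun w => by simp)
  refine ⟨Ψ, fun w => ⟨(hΨ w).1, ?_⟩⟩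
  rcases (hΨ w).2 with h | h
  · simp [h, foata_zero, depthStat_foata]
  · simp only [Equiv.coe_mulLeft, Equiv.ofBijective_apply] at h
    rw [h, Equiv.Perm.mul_apply, foata_zero, two_le_swap_zero_one_iff]
    refine ⟨Iff.rfl, fun hw => ?_⟩
    rw [depthStat_swap_zero_one_mul (by rwa [foata_zero]), depthStat_foata]

/-- on B = {w : w(1) ≥ 3} there is a sign-preserving bijection
carrying depth to drp. -/
theorem stmt12 (n : ℕ) (hn : 2 ≤ n) :
    ∃ Φ : {w : Equiv.Perm (Fin n) // 3 ≤ oneLine w 1} →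
          {w : Equiv.Perm (Fin n) // 3 ≤ oneLine w 1},
      Function.Bijective Φ ∧
        ∀ w : {w : Equiv.Perm (Fin n) // 3 ≤ oneLine w 1},
          ((-1 : ℤ) ^ invNum (Φ w).1 = (-1 : ℤ) ^ invNum w.1) ∧
          depthStat w.1 = drpStat (Φ w).1 := by
  obtain ⟨m, rfl⟩ := Nat.exists_eq_add_of_le' hn
  obtain ⟨Ψ, hΨ⟩ := exists_perm_sign_eq_and_depthStat_eq_drpStat m
  have hB (w : Equiv.Perm (Fin (m + 2))) : 3 ≤ oneLine (Ψ w) 1 ↔ 3 ≤ oneLine w 1 := by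
    rw [three_le_oneLine_one_iff, three_le_oneLine_one_iff, (hΨ w).2.1]
  let Φ := (Ψ.subtypePerm (p := fun w => 3 ≤ oneLine w 1) hB).symm
  refine ⟨Φ, Φ.bijective, fun w => ?_⟩
  obtain ⟨v, rfl⟩ := Φ.symm.surjective w
  rw [Equiv.apply_symm_apply, neg_one_pow_invNum, neg_one_pow_invNum]
  exact ⟨congrArg _ (hΨ v).1.symm, (hΨ v).2.2 ((three_le_oneLine_one_iff v.1).mp v.2)⟩
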